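/- arXiv:1610.03418 — 3 statements merged into one kernel-verified Lean document; each statement's English description precedes it below -/
import Mathlib

section
/- Let n ≥ 4 and let G be a simple graph on n vertices that is regular of degree n − 3 (so the complement of G is 2-regular, i.e., a disjoint union of cycles). Then G admits a uniform avoidance coupling of two simple random walks. -/
open Finset

/-- A uniform avoidance coupling of two simple random walks on `G`:
stochasticity, stationarity, no collision, avoidance, and uniform faithfulness. -/
def IsUAC {V : Type*} [Fintype V] [DecidableEq V] (G : SimpleGraph V) [DecidableRel G.Adj]
    (T : V × V → V × V → ℝ) (s : V × V → ℝ) : Prop :=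
  (∀ p q : V × V, 0 ≤ T p q) ∧
  (∀ p : V × V, ∑ q : V × V, T p q = 1) ∧
  (∀ p : V × V, 0 ≤ s p) ∧
  (∑ p : V × V, s p) = 1 ∧
  (∀ q : V × V, ∑ p : V × V, s p * T p q = s q) ∧
  (∀ x : V, s (x, x) = 0) ∧
  (∀ x y x' y' : V, 0 < s (x, y) → 0 < T (x, y) (x', y') → x' ≠ y ∧ y' ≠ x') ∧
  (∀ x y : V, 0 < s (x, y) →
    (∀ x' : V, (∑ y' : V, T (x, y) (x', y')) =
      if G.Adj x x' then 1 / (G.degree x : ℝ) else 0) ∧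
    (∀ y' : V, (∑ x' : V, T (x, y) (x', y')) =
      if G.Adj y y' then 1 / (G.degree y : ℝ) else 0))

/-!
If an automorphism `σ` of a graph without isolated vertices carries every vertex to a distinct
non-neighbour, then the second walker can simply follow the first one through `σ`: the pair sits at
`(x, σ x)`, the first walker takes a simple random walk step to `x'`, and the second moves to
`σ x'`. Since `σ` is an automorphism the second walker is a simple random walk too, and neither
`x' = σ x` nor `σ x' = x'` can occur.

When `G` is regular of degree `n - 3` its complement is a disjoint union of cycles, and rotating
each of these cycles by one step is such an automorphism.
-/

section Rotation

open SimpleGraph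

variable {V : Type*} {H : SimpleGraph V}

theorem formPerm_support_fst_of_mem_darts [DecidableEq V] {u v : V} {p : H.Walk u v}
    (hp : p.IsPath) {d : H.Dart} (hd : d ∈ p.darts) : p.support.formPerm d.fst = d.snd := by
  obtain ⟨i, hi, rfl⟩ := List.mem_iff_getElem.mp hd
  have hi' : i + 1 < p.support.length := by simpa using hi
  simpa [Walk.fst_darts_getElem, Walk.snd_darts_getElem]
    using List.formPerm_apply_lt_getElem p.support hp.support_nodup i hi'

theorem formPerm_tail_support_fst_of_mem_darts [DecidableEq V] {u : V} {p : H.Walk u u}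
    (hp : p.support.tail.Nodup) {d : H.Dart} (hd : d ∈ p.darts) :
    p.support.tail.formPerm d.fst = d.snd := by
  cases p with
  | nil => simp at hd
  | @cons _ v _ h q =>
    rw [Walk.support_cons, List.tail_cons] at hp ⊢
    rcases List.mem_cons.mp hd with rfl | hd
    · simpa only [Walk.cons_tail_support, Walk.getLast_support]
        using List.formPerm_apply_getLast v q.support.tail
    · exact formPerm_support_fst_of_mem_darts (Walk.IsPath.mk' hp) hd

theorem exists_mem_darts_fst_eq {u x : V} {p : H.Walk u u} (hp : ¬p.Nil) (hx : x ∈ p.support) :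
    ∃ d ∈ p.darts, d.fst = x := by
  suffices x ∈ p.support.dropLast by
    rwa [← Walk.map_fst_darts, List.mem_map] at this
  rw [← p.tail_support_perm_dropLast_support.mem_iff]
  rcases (Walk.mem_support_iff p).mp hx with rfl | hx
  · exact Walk.end_mem_tail_support hp
  · exact hx

theorem toSubgraph_adj_iff_formPerm [DecidableEq V] {u x y : V} {p : H.Walk u u}
    (hp : p.IsCycle) (hx : x ∈ p.support) :
    p.toSubgraph.Adj x y ↔
      p.support.tail.formPerm x = y ∨ p.support.tail.formPerm y = x := by
  have adj_formPerm {z : V} (hz : z ∈ p.support) :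
      p.toSubgraph.Adj z (p.support.tail.formPerm z) := by
    obtain ⟨d, hd, rfl⟩ := exists_mem_darts_fst_eq hp.not_nil hz
    rw [formPerm_tail_support_fst_of_mem_darts hp.support_nodup hd,
      Walk.adj_toSubgraph_iff_mem_edges]
    exact List.mem_map_of_mem hd
  constructor
  · intro h
    obtain ⟨d, hd, he⟩ := List.mem_map.mp (p.adj_toSubgraph_iff_mem_edges.mp h)
    have hd' := formPerm_tail_support_fst_of_mem_darts hp.support_nodup hd
    rcases dart_edge_eq_mk'_iff'.mp he with ⟨rfl, rfl⟩ | ⟨rfl, rfl⟩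
    · exact .inl hd'
    · exact .inr hd'
  · rintro (rfl | rfl)
    · exact adj_formPerm hx
    · by_cases hy : y ∈ p.support
      · exact (adj_formPerm hy).symm
      · have := List.formPerm_apply_of_notMem (mt List.mem_of_mem_tail hy)
        exact absurd (this ▸ hx) hy

theorem exists_perm_forall_mem_supp_adj_iff [Finite V] (hH : H.IsCycles) {c : H.ConnectedComponent}
    {v : V} (hv : v ∈ c.supp) (hne : (H.neighborSet v).Nonempty) :
    ∃ τ : Equiv.Perm V, ∀ x ∈ c.supp, ∀ y, H.Adj x y ↔ τ x = y ∨ τ y = x := by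
  classical
  have := Fintype.ofFinite V
  obtain ⟨p, hp, hsupp⟩ := hH.exists_cycle_toSubgraph_verts_eq_connectedComponentSupp hv hne
  refine ⟨p.support.tail.formPerm, fun x hx y ↦ ?_⟩
  rw [← hsupp] at hx
  rw [← hp.adj_toSubgraph_iff_of_isCycles hH hx,
    toSubgraph_adj_iff_formPerm hp (p.mem_verts_toSubgraph.mp hx)]

theorem exists_perm_adj_iff_of_forall_connectedComponent
    (h : ∀ c : H.ConnectedComponent,
      ∃ τ : Equiv.Perm V, ∀ x ∈ c.supp, ∀ y, H.Adj x y ↔ τ x = y ∨ τ y = x) :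
    ∃ σ : Equiv.Perm V, ∀ x y, H.Adj x y ↔ σ x = y ∨ σ y = x := by
  choose τ hτ using h
  let f (x : V) : V := τ (H.connectedComponentMk x) x
  have adj_iff (x y : V) : H.Adj x y ↔ f x = y ∨ τ (H.connectedComponentMk x) y = x :=
    hτ _ x rfl y
  have adj_apply (x : V) : H.Adj x (f x) := (adj_iff x _).mpr (.inl rfl)
  have component_eq {x y : V} (hxy : H.Adj x y) :
      H.connectedComponentMk x = H.connectedComponentMk y :=
    ConnectedComponent.sound hxy.reachable
  have injective : Function.Injective f := by
    intro x y hxy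
    have hcomp : H.connectedComponentMk x = H.connectedComponentMk y :=
      (component_eq (adj_apply x)).trans (hxy ▸ (component_eq (adj_apply y)).symm)
    exact (τ _).injective (hxy.trans (by rw [hcomp]))
  have surjective : Function.Surjective f := by
    intro x
    let y := (τ (H.connectedComponentMk x)).symm x
    have hy : τ (H.connectedComponentMk x) y = x := Equiv.apply_symm_apply _ x
    have hxy : H.Adj x y := (adj_iff x y).mpr (.inr hy)
    exact ⟨y, by rwa [component_eq hxy] at hy⟩
  refine ⟨.ofBijective f ⟨injective, surjective⟩, fun x y ↦ ⟨fun hxy ↦ ?_, ?_⟩⟩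
  · have := (adj_iff x y).mp hxy
    rwa [component_eq hxy] at this
  · rintro (rfl | rfl)
    · exact adj_apply x
    · exact (adj_apply y).symm

theorem isCycles_of_isRegularOfDegree_two [H.LocallyFinite] (hH : H.IsRegularOfDegree 2) :
    H.IsCycles := by
  intro v _
  rw [← coe_neighborFinset, Set.ncard_coe_finset, card_neighborFinset_eq_degree, hH.degree_eq]

theorem exists_iso_forall_adj_apply [Finite V] [H.LocallyFinite] (hH : H.IsRegularOfDegree 2) :
    ∃ σ : H ≃g H, ∀ x, H.Adj x (σ x) := by
  have hne (v : V) : (H.neighborSet v).Nonempty :=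
    (H.degree_pos_iff_exists_adj v).mp (by simp [hH.degree_eq])
  obtain ⟨σ, hσ⟩ := exists_perm_adj_iff_of_forall_connectedComponent fun c ↦
    have ⟨v, hv⟩ := c.nonempty_supp
    exists_perm_forall_mem_supp_adj_iff (isCycles_of_isRegularOfDegree_two hH) hv (hne v)
  exact ⟨⟨σ, by simp [hσ]⟩, fun x ↦ (hσ x _).mpr (.inl rfl)⟩

/-- Graph isomorphisms between complements are isomorphisms between the graphs themselves, with the
same underlying map. -/
def isoOfCompl {W : Type*} {G : SimpleGraph V} {G' : SimpleGraph W} (σ : Gᶜ ≃g G'ᶜ) : G ≃g G' where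
  toEquiv := σ.toEquiv
  map_rel_iff' := (Embedding.complEquiv.symm σ.toEmbedding).map_rel_iff

end Rotation

section GraphWeight

variable {V W R : Type*} [DecidableEq W]

/-- The weight on pairs obtained by pushing a weight `w` on `V` forward along `x ↦ (x, f x)`. -/
def graphWeight [Zero R] (f : V → W) (w : V → R) (p : V × W) : R :=
  if p.2 = f p.1 then w p.1 else 0

theorem graphWeight_nonneg [Zero R] [Preorder R] {f : V → W} {w : V → R} (hw : 0 ≤ w) (p : V × W) :
    0 ≤ graphWeight f w p := by
  unfold graphWeight
  split_ifs
  exacts [hw p.1, le_rfl]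

theorem eq_and_ne_zero_of_graphWeight_ne_zero [Zero R] {f : V → W} {w : V → R} {x : V} {y : W}
    (h : graphWeight f w (x, y) ≠ 0) : y = f x ∧ w x ≠ 0 := by
  simpa [graphWeight] using h

theorem sum_graphWeight_snd [AddCommMonoid R] [Fintype W] (f : V → W) (w : V → R) (x : V) :
    ∑ y, graphWeight f w (x, y) = w x := by
  simp [graphWeight]

theorem sum_graphWeight_fst [AddCommMonoid R] [Fintype V] (e : V ≃ W) (w : V → R) (y : W) :
    ∑ x, graphWeight e w (x, y) = w (e.symm y) := by
  classical
  simp [graphWeight, ← Equiv.symm_apply_eq]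

theorem sum_graphWeight [AddCommMonoid R] [Fintype V] [Fintype W] (f : V → W) (w : V → R) :
    ∑ p, graphWeight f w p = ∑ x, w x := by
  simp [Fintype.sum_prod_type, sum_graphWeight_snd]

theorem sum_graphWeight_mul_fst [NonUnitalNonAssocSemiring R] [Fintype V] [Fintype W] (f : V → W)
    (w : V → R) (g : V → R) : ∑ p, graphWeight f w p * g p.1 = ∑ x, w x * g x := by
  simp [Fintype.sum_prod_type, ← Finset.sum_mul, sum_graphWeight_snd]

theorem sum_mul_graphWeight [NonUnitalNonAssocSemiring R] {ι : Type*} [Fintype ι] (f : V → W)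
    (a : ι → R) (w : ι → V → R) (p : V × W) :
    ∑ i, a i * graphWeight f (w i) p = graphWeight f (fun x ↦ ∑ i, a i * w i x) p := by
  by_cases hp : p.2 = f p.1 <;> simp [graphWeight, hp]

end GraphWeight

section SimpleRandomWalk

open SimpleGraph

variable {V : Type*} [Fintype V] (G : SimpleGraph V) [DecidableRel G.Adj]

/-- The transition probability from `x` to `y` of the simple random walk on `G`; the walk dies at an
isolated vertex. -/
noncomputable def walkTransition (x y : V) : ℝ :=
  if G.Adj x y then 1 / (G.degree x : ℝ) else 0

/-- The probability distribution on the vertices proportional to the degree, which is stationary for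
the simple random walk. It is identically zero on an edgeless graph. -/
noncomputable def degreeDistribution (x : V) : ℝ :=
  G.degree x / ∑ y, (G.degree y : ℝ)

variable {G}

theorem walkTransition_nonneg (x : V) : 0 ≤ walkTransition G x := by
  intro y
  unfold walkTransition
  split_ifs <;> simp

theorem adj_of_walkTransition_ne_zero {x y : V} (h : walkTransition G x y ≠ 0) : G.Adj x y :=
  (ite_ne_right_iff.mp h).1

theorem sum_walkTransition {x : V} (hx : 0 < G.degree x) : ∑ y, walkTransition G x y = 1 := by
  simp [walkTransition, ← Finset.sum_filter, ← neighborFinset_eq_filter, hx.ne']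

theorem walkTransition_map {W : Type*} [Fintype W] {G' : SimpleGraph W} [DecidableRel G'.Adj]
    (σ : G ≃g G') (x y : V) : walkTransition G' (σ x) (σ y) = walkTransition G x y := by
  simp only [walkTransition, σ.map_adj_iff, σ.degree_eq]

theorem degreeDistribution_nonneg : 0 ≤ degreeDistribution G := by
  intro x
  unfold degreeDistribution
  positivity

theorem sum_degreeDistribution {x : V} (hx : 0 < G.degree x) :
    ∑ y, degreeDistribution G y = 1 := by
  unfold degreeDistribution
  rw [← Finset.sum_div]
  refine div_self (Finset.sum_pos' (fun _ _ ↦ by positivity) ⟨x, Finset.mem_univ x, ?_⟩).ne'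
  exact_mod_cast hx

theorem degreeDistribution_mul_walkTransition_comm (x y : V) :
    degreeDistribution G x * walkTransition G x y =
      degreeDistribution G y * walkTransition G y x := by
  by_cases h : G.Adj x y
  · have hx : (G.degree x : ℝ) ≠ 0 := mod_cast h.degree_pos_left.ne'
    have hy : (G.degree y : ℝ) ≠ 0 := mod_cast h.degree_pos_right.ne'
    simp only [degreeDistribution, walkTransition, h, h.symm, if_true]
    field_simp
  · simp [walkTransition, h, mt Adj.symm h]

theorem sum_degreeDistribution_mul_walkTransition {y : V} (hy : 0 < G.degree y) :
    ∑ x, degreeDistribution G x * walkTransition G x y = degreeDistribution G y := by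
  simp_rw [degreeDistribution_mul_walkTransition_comm _ y, ← Finset.mul_sum,
    sum_walkTransition hy, mul_one]

theorem isUAC_of_forall_compl_adj_apply [DecidableEq V] [Nonempty V] (σ : G ≃g G)
    (hpos : ∀ x, 0 < G.degree x) (hσ : ∀ x, Gᶜ.Adj x (σ x)) :
    IsUAC G (fun p ↦ graphWeight σ (walkTransition G p.1))
      (graphWeight σ (degreeDistribution G)) := by
  refine ⟨fun p ↦ graphWeight_nonneg (walkTransition_nonneg p.1), fun p ↦ ?_,
    graphWeight_nonneg degreeDistribution_nonneg, ?_, fun q ↦ ?_, fun x ↦ ?_, ?_, ?_⟩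
  · rw [sum_graphWeight, sum_walkTransition (hpos p.1)]
  · rw [sum_graphWeight, sum_degreeDistribution (hpos (Classical.arbitrary V))]
  · have stationary (y : V) :
        ∑ p, graphWeight σ (degreeDistribution G) p * walkTransition G p.1 y =
          degreeDistribution G y := by
      rw [sum_graphWeight_mul_fst _ _ fun x ↦ walkTransition G x y,
        sum_degreeDistribution_mul_walkTransition (hpos y)]
    rw [sum_mul_graphWeight _ _ fun p : V × V ↦ walkTransition G p.1, funext stationary]
  · by_contra h
    exact (hσ x).ne (eq_and_ne_zero_of_graphWeight_ne_zero h).1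
  · intro x y x' y' hs hT
    obtain ⟨rfl, -⟩ := eq_and_ne_zero_of_graphWeight_ne_zero hs.ne'
    obtain ⟨rfl, hstep⟩ := eq_and_ne_zero_of_graphWeight_ne_zero hT.ne'
    have hadj : G.Adj x x' := adj_of_walkTransition_ne_zero hstep
    refine ⟨?_, (hσ x').ne'⟩
    rintro rfl
    exact ((compl_adj _ _ _).mp (hσ x)).2 hadj
  · intro x y hs
    obtain ⟨rfl, -⟩ := eq_and_ne_zero_of_graphWeight_ne_zero hs.ne'
    refine ⟨sum_graphWeight_snd σ (walkTransition G x), fun y' ↦ ?_⟩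
    calc ∑ x', graphWeight σ (walkTransition G x) (x', y')
        = walkTransition G x (σ.symm y') := sum_graphWeight_fst σ.toEquiv _ y'
      _ = walkTransition G (σ x) y' := by rw [← walkTransition_map σ, σ.apply_symm_apply]

end SimpleRandomWalk

/-- For $n ≥ 4$, any $(n-3)$-regular simple graph on $n$ vertices admits a uniform
avoidance coupling of two simple random walks. -/
theorem uac_of_regular_degree_sub_three {V : Type*} [Fintype V] [DecidableEq V]
    (G : SimpleGraph V) [DecidableRel G.Adj]
    (n : ℕ) (hn : 4 ≤ n) (hcard : Fintype.card V = n)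
    (hreg : G.IsRegularOfDegree (n - 3)) :
    ∃ (T : V × V → V × V → ℝ) (s : V × V → ℝ), IsUAC G T s := by
  subst hcard
  have : Nonempty V := Fintype.card_pos_iff.mp (by lia)
  have hpos (x : V) : 0 < G.degree x := by rw [hreg.degree_eq]; lia
  have hcompl : Gᶜ.IsRegularOfDegree 2 := by
    convert hreg.compl using 1
    lia
  obtain ⟨σ, hσ⟩ := exists_iso_forall_adj_apply hcompl
  exact ⟨_, _, isUAC_of_forall_compl_adj_apply (isoOfCompl σ) hpos hσ⟩
end

section
/- Let G be a finite simple graph that is regular of degree k ≥ 1. Then G admits a uniform avoidance coupling of two simple random walks if and only if G admits a minimum-entropy uniform avoidance coupling of two simple random walks. -/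
/-!
From a state `(x, y)` in the support `S` of the stationary law, the transition weights of a uniform
avoidance coupling on a `k`-regular graph, rescaled by `k`, form a doubly stochastic matrix indexed
by `N(x) × N(y)`. By Birkhoff's theorem the support of this matrix contains a perfect matching, and
moving along a uniformly random edge of that matching is a faithful transition whose support lies in
that of the original one, so it still avoids collisions. The set `S` is closed under the original
transitions, hence under the thinned ones. The thinned chain therefore has a stationary law carried
by `S`, where all the requirements hold. That law is the normalized absolute value of a left
eigenvector of the chain restricted to `S`, for the eigenvalue `1`.
-/

open Finset

/-- A minimum-entropy UAC on a `k`-regular graph: at every state `(x, y)` of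
positive stationary probability there is a bijection `m` from `N(x)` to `N(y)`
such that the transition puts mass `1/k` on each pair `(x', m x')` with
`x' ∈ N(x)`, and mass 0 elsewhere. -/
def IsMinEntropyUAC {V : Type*} [Fintype V] [DecidableEq V]
    (G : SimpleGraph V) [DecidableRel G.Adj] (k : ℕ)
    (T : V × V → V × V → ℝ) (s : V × V → ℝ) : Prop :=
  IsUAC G T s ∧
  ∀ x y : V, 0 < s (x, y) →
    ∃ m : V → V, Set.BijOn m (G.neighborSet x) (G.neighborSet y) ∧
      ∀ x' y' : V, T (x, y) (x', y') =
        if G.Adj x x' ∧ y' = m x' then 1 / (k : ℝ) else 0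

section StationaryDistribution

open Matrix

variable {R n : Type*} [Fintype n]

lemma exists_ne_zero_vecMul_eq_self_of_mulVec_eq_self [CommRing R] [IsDomain R]
    {A : Matrix n n R} {w : n → R} (hw : w ≠ 0) (hA : A *ᵥ w = w) :
    ∃ v ≠ 0, v ᵥ* A = v := by
  classical
  have hdet : (A - 1).det = 0 :=
    exists_mulVec_eq_zero_iff.1 ⟨w, hw, by rw [sub_mulVec, one_mulVec, hA, sub_self]⟩
  obtain ⟨v, hv, hvA⟩ := exists_vecMul_eq_zero_iff.2 hdet
  exact ⟨v, hv, by rwa [vecMul_sub, vecMul_one, sub_eq_zero] at hvA⟩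

variable [DecidableEq n]

lemma abs_vecMul_eq_abs_of_mem_rowStochastic [CommRing R] [LinearOrder R] [IsStrictOrderedRing R]
    {P : Matrix n n R} (hP : P ∈ rowStochastic R n) {v : n → R} (hv : v ᵥ* P = v) :
    |v| ᵥ* P = |v| := by
  have hle (j : n) : |v| j ≤ (|v| ᵥ* P) j := calc
    |v| j = |∑ i, v i * P i j| := congrArg (|·|) (congrFun hv j).symm
    _ ≤ ∑ i, |v i * P i j| := abs_sum_le_sum_abs _ _
    _ = (|v| ᵥ* P) j := sum_congr rfl fun i _ ↦ by
      rw [abs_mul, abs_of_nonneg (hP.1 i j), Pi.abs_apply]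
  have hsum : ∑ j, |v| j = ∑ j, (|v| ᵥ* P) j := by
    simp only [← dotProduct_one, ← dotProduct_mulVec, hP.2]
  exact funext fun j ↦ ((sum_eq_sum_iff_of_le fun j _ ↦ hle j).1 hsum j (mem_univ j)).symm

variable [Field R] [LinearOrder R] [IsStrictOrderedRing R] {P : Matrix n n R}

lemma exists_mem_stdSimplex_vecMul_eq_self [Nonempty n] (hP : P ∈ rowStochastic R n) :
    ∃ v ∈ stdSimplex R n, v ᵥ* P = v := by
  obtain ⟨v, hv, hvP⟩ := exists_ne_zero_vecMul_eq_self_of_mulVec_eq_self one_ne_zero hP.2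
  have hpos : 0 < ∑ i, |v| i := by
    obtain ⟨i, hi⟩ := Function.ne_iff.1 hv
    exact sum_pos' (fun _ _ ↦ abs_nonneg _) ⟨i, mem_univ i, abs_pos.2 hi⟩
  refine ⟨(∑ i, |v| i)⁻¹ • |v|, ⟨fun i ↦ ?_, ?_⟩, ?_⟩
  · exact mul_nonneg (inv_nonneg.2 hpos.le) (abs_nonneg _)
  · simp only [Pi.smul_apply, smul_eq_mul, ← mul_sum, inv_mul_cancel₀ hpos.ne']
  · rw [smul_vecMul, abs_vecMul_eq_abs_of_mem_rowStochastic hP hvP]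

lemma exists_mem_stdSimplex_vecMul_eq_self_support_subset (hP : P ∈ rowStochastic R n)
    {S : Set n} (hS : S.Nonempty) (hclosed : ∀ i ∈ S, ∀ j ∉ S, P i j = 0) :
    ∃ v ∈ stdSimplex R n, v ᵥ* P = v ∧ Function.support v ⊆ S := by
  classical
  have : Nonempty S := hS.to_subtype
  have hPS : P.submatrix (↑) (↑) ∈ rowStochastic R S :=
    mem_rowStochastic_iff_sum.2 ⟨fun i j ↦ hP.1 i j, fun i ↦
      (sum_congr_set S (P i) _ (fun _ _ ↦ rfl) (hclosed i i.2)).symm.trans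
        (sum_row_of_mem_rowStochastic hP i)⟩
  obtain ⟨u, ⟨hu_nonneg, hu_sum⟩, hu⟩ := exists_mem_stdSimplex_vecMul_eq_self hPS
  let v : n → R := fun i ↦ if hi : i ∈ S then u ⟨i, hi⟩ else 0
  have hv_mem {i : n} (hi : i ∈ S) : v i = u ⟨i, hi⟩ := dif_pos hi
  have hv_notMem {i : n} (hi : i ∉ S) : v i = 0 := dif_neg hi
  have hvP (j : n) : (v ᵥ* P) j = ∑ i : S, u i * P i j :=
    sum_congr_set S _ _ (fun i hi ↦ by rw [hv_mem hi]) fun i hi ↦ by rw [hv_notMem hi, zero_mul]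
  refine ⟨v, ⟨fun i ↦ ?_, ?_⟩, funext fun j ↦ ?_, fun i hi ↦ not_imp_comm.1 hv_notMem hi⟩
  · by_cases hi : i ∈ S
    · exact (hu_nonneg _).trans_eq (hv_mem hi).symm
    · exact (hv_notMem hi).ge
  · rw [← hu_sum]
    exact sum_congr_set S v u (fun _ ↦ hv_mem) fun _ ↦ hv_notMem
  · rw [hvP]
    by_cases hj : j ∈ S
    · rw [hv_mem hj]
      exact congrFun hu ⟨j, hj⟩
    · rw [hv_notMem hj]
      exact sum_eq_zero fun i _ ↦ by rw [hclosed i i.2 j hj, mul_zero]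

end StationaryDistribution

section PositiveDiagonal

open Matrix

variable {R n α β : Type*} [Field R] [LinearOrder R] [IsStrictOrderedRing R]
  [Fintype n] [DecidableEq n] [Fintype α] [Fintype β]

lemma exists_perm_forall_pos_of_mem_doublyStochastic {M : Matrix n n R}
    (hM : M ∈ doublyStochastic R n) : ∃ σ : Equiv.Perm n, ∀ i, 0 < M i (σ i) := by
  obtain ⟨w, hw, hw_sum, rfl⟩ := exists_eq_sum_perm_of_mem_doublyStochastic hM
  obtain ⟨σ, -, hσ⟩ := exists_lt_of_sum_lt (s := univ) (f := 0) (g := w) (by simp [hw_sum])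
  have hterm (τ : Equiv.Perm n) (i : n) : 0 ≤ (w τ • τ.permMatrix R) i (σ i) :=
    mul_nonneg (hw τ) (permMatrix_mem_doublyStochastic.1 _ _)
  refine ⟨σ, fun i ↦ ?_⟩
  rw [Matrix.sum_apply]
  refine sum_pos' (fun τ _ ↦ hterm τ i) ⟨σ, mem_univ σ, ?_⟩
  simpa [Equiv.toPEquiv_apply] using hσ

lemma exists_equiv_forall_pos {M : Matrix α β R} {c : R} (hc : 0 < c) (hM : ∀ a b, 0 ≤ M a b)
    (hrow : ∀ a, ∑ b, M a b = c) (hcol : ∀ b, ∑ a, M a b = c) :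
    ∃ e : α ≃ β, ∀ a, 0 < M a (e a) := by
  classical
  have hcard : Fintype.card α = Fintype.card β := by
    have : (Fintype.card α : R) * c = Fintype.card β * c := calc
      (Fintype.card α : R) * c = ∑ a, ∑ b, M a b := by simp [hrow]
      _ = ∑ b, ∑ a, M a b := sum_comm
      _ = Fintype.card β * c := by simp [hcol]
    exact_mod_cast mul_right_cancel₀ hc.ne' this
  let f : α ≃ β := Fintype.equivOfCardEq hcard
  have hds : c⁻¹ • M.submatrix id f ∈ doublyStochastic R α := by
    refine mem_doublyStochastic_iff_sum.2 ⟨fun a b ↦ ?_, fun a ↦ ?_, fun b ↦ ?_⟩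
    · exact mul_nonneg (inv_nonneg.2 hc.le) (hM _ _)
    · simp [← mul_sum, f.sum_comp (M a), hrow, hc.ne']
    · simp [← mul_sum, hcol, hc.ne']
  obtain ⟨σ, hσ⟩ := exists_perm_forall_pos_of_mem_doublyStochastic hds
  exact ⟨σ.trans f, fun a ↦ pos_of_mul_pos_right (hσ a) (inv_nonneg.2 hc.le)⟩

end PositiveDiagonal

section Step

variable {V : Type*} [Fintype V] (G : SimpleGraph V) [DecidableRel G.Adj]

/-- A weight `μ` on `V × V` is a uniform step from `(x, y)` if its two marginals are those of a
simple random walk step from `x` and from `y`: this is uniform faithfulness at the state `(x, y)`.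
Nonnegativity of `μ` is not part of the notion. -/
def IsUniformStep (x y : V) (μ : V × V → ℝ) : Prop :=
  (∀ x' : V, (∑ y' : V, μ (x', y')) = if G.Adj x x' then 1 / (G.degree x : ℝ) else 0) ∧
  (∀ y' : V, (∑ x' : V, μ (x', y')) = if G.Adj y y' then 1 / (G.degree y : ℝ) else 0)

/-- The law of `(X, m X)` for `X` a uniformly random neighbor of `x`: the minimum-entropy step
from `(x, y)` when `m` is a bijection from `N(x)` to `N(y)`. -/
noncomputable def matchingStep [DecidableEq V] (x : V) (m : V → V) (q : V × V) : ℝ :=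
  if G.Adj x q.1 ∧ q.2 = m q.1 then 1 / (G.degree x : ℝ) else 0

variable {G} {x y : V}

lemma IsUniformStep.sum_eq_sum {μ ν : V × V → ℝ} (hμ : IsUniformStep G x y μ)
    (hν : IsUniformStep G x y ν) : ∑ q, μ q = ∑ q, ν q := by
  simp only [Fintype.sum_prod_type, hμ.1, hν.1]

lemma IsUniformStep.swap {μ : V × V → ℝ} (hμ : IsUniformStep G x y μ) :
    IsUniformStep G y x (μ ∘ Prod.swap) :=
  ⟨hμ.2, hμ.1⟩

lemma IsUniformStep.eq_zero_of_not_adj {μ : V × V → ℝ} (hμ : IsUniformStep G x y μ)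
    (hμ_nonneg : ∀ q, 0 ≤ μ q) {x' y' : V} (h : ¬G.Adj y y') : μ (x', y') = 0 := by
  have hsum := hμ.2 y'
  rw [if_neg h, sum_eq_zero_iff_of_nonneg fun _ _ ↦ hμ_nonneg _] at hsum
  exact hsum x' (mem_univ x')

lemma IsUniformStep.sum_neighborSet {μ : V × V → ℝ} (hμ : IsUniformStep G x y μ)
    (hμ_nonneg : ∀ q, 0 ≤ μ q) {x' : V} (h : G.Adj x x') :
    ∑ y' : G.neighborSet y, μ (x', y') = 1 / (G.degree x : ℝ) := calc
  ∑ y' : G.neighborSet y, μ (x', y') = ∑ y', μ (x', y') :=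
    (sum_congr_set (G.neighborSet y) (fun y' ↦ μ (x', y')) _ (fun _ _ ↦ rfl)
      fun _ ↦ hμ.eq_zero_of_not_adj hμ_nonneg).symm
  _ = 1 / (G.degree x : ℝ) := (hμ.1 x').trans (if_pos h)

lemma IsUniformStep.exists_bijOn_neighborSet {μ : V × V → ℝ} (hμ : IsUniformStep G x y μ)
    (hμ_nonneg : ∀ q, 0 ≤ μ q) (hpos : 0 < G.degree x) (hdeg : G.degree x = G.degree y) :
    ∃ m : V → V, Set.BijOn m (G.neighborSet x) (G.neighborSet y) ∧
      ∀ x', G.Adj x x' → 0 < μ (x', m x') := by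
  obtain ⟨e, he⟩ := exists_equiv_forall_pos (α := G.neighborSet x) (β := G.neighborSet y)
    (M := fun a b ↦ μ (a, b)) (c := 1 / (G.degree x : ℝ)) (by positivity) (fun _ _ ↦ hμ_nonneg _)
    (fun a ↦ hμ.sum_neighborSet hμ_nonneg a.2)
    (fun b ↦ hdeg ▸ hμ.swap.sum_neighborSet (fun q ↦ hμ_nonneg q.swap) b.2)
  classical
  let m : V → V := fun x' ↦ if hx' : G.Adj x x' then e ⟨x', hx'⟩ else x'
  have hm {x' : V} (hx' : G.Adj x x') : m x' = e ⟨x', hx'⟩ := dif_pos hx'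
  refine ⟨m, ⟨fun x' hx' ↦ ?_, fun a ha b hb hab ↦ ?_, fun y' hy' ↦ ?_⟩, fun x' hx' ↦ ?_⟩
  · rw [hm hx']
    exact (e _).2
  · rw [hm ha, hm hb] at hab
    exact congrArg Subtype.val (e.injective (Subtype.ext hab))
  · obtain ⟨⟨x', hx'⟩, he'⟩ := e.surjective ⟨y', hy'⟩
    exact ⟨x', hx', by rw [hm hx', he']⟩
  · rw [hm hx']
    exact he ⟨x', hx'⟩

variable [DecidableEq V]

lemma matchingStep_nonneg (x : V) (m : V → V) (q : V × V) : 0 ≤ matchingStep G x m q := by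
  unfold matchingStep; positivity

lemma adj_and_eq_of_matchingStep_pos {m : V → V} {q : V × V} (h : 0 < matchingStep G x m q) :
    G.Adj x q.1 ∧ q.2 = m q.1 := by
  by_contra hq
  exact h.ne' (if_neg hq)

lemma isUniformStep_matchingStep {m : V → V}
    (hm : Set.BijOn m (G.neighborSet x) (G.neighborSet y)) :
    IsUniformStep G x y (matchingStep G x m) := by
  have hdeg : G.degree x = G.degree y := by
    simpa only [G.card_neighborSet_eq_degree] using Fintype.card_congr hm.equiv
  refine ⟨fun x' ↦ ?_, fun y' ↦ ?_⟩
  · by_cases h : G.Adj x x' <;> simp [matchingStep, h]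
  by_cases h : G.Adj y y'
  · obtain ⟨x', hx', rfl⟩ := hm.surjOn h
    rw [if_pos h, ← hdeg, sum_eq_single x']
    · exact if_pos ⟨hx', rfl⟩
    · exact fun z _ hz ↦ if_neg fun ⟨hxz, hmz⟩ ↦ hz (hm.injOn hxz hx' hmz.symm)
    · exact fun hx' ↦ absurd (mem_univ _) hx'
  · rw [if_neg h]
    refine sum_eq_zero fun x' _ ↦ if_neg fun ⟨hxx', hy'⟩ ↦ h ?_
    obtain rfl : y' = m x' := hy'
    exact hm.mapsTo hxx'

end Step

namespace IsUAC

variable {V : Type*} [Fintype V] [DecidableEq V] {G : SimpleGraph V} [DecidableRel G.Adj]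
  {T : V × V → V × V → ℝ} {s : V × V → ℝ}

lemma isUniformStep (h : IsUAC G T s) {p : V × V} (hp : 0 < s p) :
    IsUniformStep G p.1 p.2 (T p) :=
  h.2.2.2.2.2.2.2 p.1 p.2 hp

lemma exists_pos (h : IsUAC G T s) : ∃ p, 0 < s p := by
  obtain ⟨-, -, -, hs_sum, -⟩ := h
  simpa using exists_lt_of_sum_lt (s := univ) (f := 0) (g := s) (by simp [hs_sum])

lemma pos_of_pos (h : IsUAC G T s) {p q : V × V} (hp : 0 < s p) (hpq : 0 < T p q) : 0 < s q := by
  obtain ⟨hT_nonneg, -, hs_nonneg, -, hst, -⟩ := h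
  rw [← hst q]
  exact sum_pos' (fun i _ ↦ mul_nonneg (hs_nonneg i) (hT_nonneg i q))
    ⟨p, mem_univ p, mul_pos hp hpq⟩

lemma exists_isUAC_of_support_subset (h : IsUAC G T s) {M : V × V → V × V → ℝ}
    (hM_nonneg : ∀ p q, 0 < s p → 0 ≤ M p q)
    (hM_step : ∀ p, 0 < s p → IsUniformStep G p.1 p.2 (M p))
    (hM_supp : ∀ p q, 0 < s p → 0 < M p q → 0 < T p q) :
    ∃ T' s', IsUAC G T' s' ∧ (∀ p, 0 < s' p → 0 < s p) ∧ ∀ p, 0 < s' p → T' p = M p := by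
  obtain ⟨hT_nonneg, hT_sum, -, -, -, hs_diag, havoid, -⟩ := id h
  -- Off the support of `s` the rows only have to be stochastic, and those of `T` are.
  let T' : V × V → V × V → ℝ := fun p ↦ if 0 < s p then M p else T p
  have hT'_eq {p : V × V} (hp : 0 < s p) : T' p = M p := if_pos hp
  have hT'_supp {p q : V × V} (hp : 0 < s p) (hpq : 0 < T' p q) : 0 < T p q :=
    hM_supp p q hp (hT'_eq hp ▸ hpq)
  have hT'_nonneg (p q : V × V) : 0 ≤ T' p q := by
    by_cases hp : 0 < s p
    · exact hT'_eq hp ▸ hM_nonneg p q hp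
    · simp only [T', hp, if_false, hT_nonneg]
  have hT'_sum (p : V × V) : ∑ q, T' p q = 1 := by
    by_cases hp : 0 < s p
    · rw [hT'_eq hp, (hM_step p hp).sum_eq_sum (h.isUniformStep hp), hT_sum]
    · simp only [T', hp, if_false, hT_sum]
  obtain ⟨s', ⟨hs'_nonneg, hs'_sum⟩, hs'_stat, hs'_supp⟩ :=
    exists_mem_stdSimplex_vecMul_eq_self_support_subset
      (P := .of T') (Matrix.mem_rowStochastic_iff_sum.2 ⟨hT'_nonneg, hT'_sum⟩)
      (S := {p | 0 < s p}) h.exists_pos fun p hp q hq ↦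
        le_antisymm (not_lt.1 fun hpq ↦ hq (h.pos_of_pos hp (hT'_supp hp hpq))) (hT'_nonneg p q)
  have hs {p : V × V} (hp : 0 < s' p) : 0 < s p := hs'_supp hp.ne'
  refine ⟨T', s', ⟨hT'_nonneg, hT'_sum, hs'_nonneg, hs'_sum, congrFun hs'_stat, fun x ↦ ?_,
    fun x y x' y' hp hpq ↦ havoid x y x' y' (hs hp) (hT'_supp (hs hp) hpq), fun x y hp ↦ ?_⟩,
    fun p ↦ hs, fun p hp ↦ hT'_eq (hs hp)⟩
  · exact le_antisymm (not_lt.1 fun hx ↦ (hs hx).ne' (hs_diag x)) (hs'_nonneg _)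
  · rw [hT'_eq (hs hp)]
    exact hM_step (x, y) (hs hp)

end IsUAC

/-- A finite `k`-regular graph ($k ≥ 1$) admits a uniform avoidance coupling of two
simple random walks if and only if it admits a minimum-entropy one. -/
theorem regular_uac_iff_min_entropy_uac {V : Type*} [Fintype V] [DecidableEq V]
    (G : SimpleGraph V) [DecidableRel G.Adj]
    (k : ℕ) (hk : 1 ≤ k) (hreg : G.IsRegularOfDegree k) :
    (∃ (T : V × V → V × V → ℝ) (s : V × V → ℝ), IsUAC G T s) ↔
    (∃ (T : V × V → V × V → ℝ) (s : V × V → ℝ), IsMinEntropyUAC G k T s) := by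
  refine ⟨fun ⟨T, s, h⟩ ↦ ?_, fun ⟨T, s, h, _⟩ ↦ ⟨T, s, h⟩⟩
  have hmatching (p : V × V) (hp : 0 < s p) : ∃ m : V → V,
      Set.BijOn m (G.neighborSet p.1) (G.neighborSet p.2) ∧
        ∀ x', G.Adj p.1 x' → 0 < T p (x', m x') :=
    (h.isUniformStep hp).exists_bijOn_neighborSet (h.1 p) (by rwa [hreg]) (by rw [hreg, hreg])
  have : Nonempty (V → V) := ⟨id⟩
  choose! m hm_bijOn hm_pos using hmatching
  obtain ⟨T', s', h', hs, hT'⟩ := h.exists_isUAC_of_support_subset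
    (M := fun p ↦ matchingStep G p.1 (m p)) (fun p q _ ↦ matchingStep_nonneg p.1 (m p) q)
    (fun p hp ↦ isUniformStep_matchingStep (hm_bijOn p hp))
    (fun p q hp hpq ↦ by
      obtain ⟨hadj, hq⟩ := adj_and_eq_of_matchingStep_pos hpq
      simpa only [← hq] using hm_pos p hp q.1 hadj)
  refine ⟨T', s', h', fun x y hxy ↦ ⟨m (x, y), hm_bijOn (x, y) (hs _ hxy), fun x' y' ↦ ?_⟩⟩
  rw [hT' _ hxy, matchingStep, hreg]
end

section
/- Let G be a connected, non-complete strongly regular graph with parameters (n, k, λ, μ) such that 2·max(λ, μ) ≤ k or 2λ < k. Then G admits a uniform avoidance coupling of two simple random walks. -/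
open Finset

/- Keep the two walkers at distinct non-adjacent positions. From such a pair `(x, y)`, they can take
their steps along a bijection `N(x) ≃ N(y)` that sends each vertex to a distinct non-neighbour;
avoidance is then automatic, because a neighbour of `x` is never `y`. By Hall's theorem the
bijection exists unless there are `S ⊆ N(x)` and `T ⊆ N(y)` with `|S| + |T| > k` such that each
`s ∈ S` is equal or adjacent to each `t ∈ T`, and counting common neighbours rules this out as soon
as `2λ ≤ k`. -/

section StationaryDistribution

variable {R ι : Type*} [Fintype ι] {M : Matrix ι ι R}

open scoped Matrix

theorem exists_ne_zero_vecMul_eq_self_of_mulVec_one [CommRing R] [IsDomain R] [Nonempty ι]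
    (hM : M *ᵥ 1 = 1) : ∃ v ≠ 0, v ᵥ* M = v := by
  classical
  have hdet : (M - 1).det = 0 :=
    Matrix.exists_mulVec_eq_zero_iff.1
      ⟨1, one_ne_zero, by rw [Matrix.sub_mulVec, hM, Matrix.one_mulVec, sub_self]⟩
  obtain ⟨v, hv, hvM⟩ := Matrix.exists_vecMul_eq_zero_iff.2 hdet
  rw [Matrix.vecMul_sub, Matrix.vecMul_one, sub_eq_zero] at hvM
  exact ⟨v, hv, hvM⟩

variable [DecidableEq ι]

theorem abs_vecMul_eq_abs_of_vecMul_eq_self [CommRing R] [LinearOrder R] [IsStrictOrderedRing R]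
    (hM : M ∈ Matrix.rowStochastic R ι) {v : ι → R} (hv : v ᵥ* M = v) : |v| ᵥ* M = |v| := by
  have hle : ∀ j ∈ univ, |v| j ≤ (|v| ᵥ* M) j := fun j _ ↦ by
    calc |v| j = |∑ i, v i * M i j| := by rw [Pi.abs_apply, ← congrFun hv j]; rfl
      _ ≤ ∑ i, |v i * M i j| := abs_sum_le_sum_abs _ _
      _ = (|v| ᵥ* M) j := sum_congr rfl fun i _ ↦ by
        rw [abs_mul, abs_of_nonneg (Matrix.nonneg_of_mem_rowStochastic hM), Pi.abs_apply]
  have hsum : ∑ j, |v| j = ∑ j, (|v| ᵥ* M) j := by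
    simp only [Matrix.vecMul, dotProduct]
    rw [sum_comm]
    simp only [← mul_sum, Matrix.sum_row_of_mem_rowStochastic hM, mul_one]
  exact funext fun j ↦ ((sum_eq_sum_iff_of_le hle).1 hsum j (mem_univ j)).symm

theorem exists_mem_stdSimplex_vecMul_eq_self_s19 [Field R] [LinearOrder R] [IsStrictOrderedRing R]
    [Nonempty ι] (hM : M ∈ Matrix.rowStochastic R ι) : ∃ s ∈ stdSimplex R ι, s ᵥ* M = s := by
  obtain ⟨v, hv, hvM⟩ :=
    exists_ne_zero_vecMul_eq_self_of_mulVec_one (Matrix.one_vecMul_of_mem_rowStochastic hM)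
  obtain ⟨i, hi⟩ := Function.ne_iff.1 hv
  have hpos : 0 < ∑ j, |v| j :=
    sum_pos' (fun j _ ↦ abs_nonneg (v j)) ⟨i, mem_univ i, abs_pos.2 hi⟩
  refine ⟨(∑ j, |v| j)⁻¹ • |v|, ⟨fun j ↦ ?_, ?_⟩, ?_⟩
  · exact mul_nonneg (inv_nonneg.2 hpos.le) (abs_nonneg (v j))
  · simp only [Pi.smul_apply, smul_eq_mul, ← mul_sum, inv_mul_cancel₀ hpos.ne']
  · rw [Matrix.smul_vecMul, abs_vecMul_eq_abs_of_vecMul_eq_self hM hvM]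

end StationaryDistribution

theorem exists_equiv_of_forall_card_add_card_le {α β : Type*} [Fintype α] [Fintype β]
    (hcard : Fintype.card α = Fintype.card β) {r : α → β → Prop}
    (hr : ∀ (S : Finset α) (T : Finset β), (∀ a ∈ S, ∀ b ∈ T, ¬ r a b) →
      #S + #T ≤ Fintype.card β) :
    ∃ e : α ≃ β, ∀ a, r a (e a) := by
  classical
  have hall (S : Finset α) : #S ≤ #{b | ∃ a ∈ S, r a b} := by
    have h := hr S ({b | ∃ a ∈ S, r a b} : Finset β)ᶜ fun a ha b hb hab ↦
      mem_compl.1 hb (mem_filter.2 ⟨mem_univ b, a, ha, hab⟩)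
    rw [← card_add_card_compl ({b | ∃ a ∈ S, r a b} : Finset β)] at h
    exact Nat.le_of_add_le_add_right h
  obtain ⟨f, hinj, hf⟩ := (Fintype.all_card_le_filter_rel_iff_exists_injective r).1 hall
  exact ⟨.ofBijective f ((Fintype.bijective_iff_injective_and_card f).2 ⟨hinj, hcard⟩), hf⟩

section Graph

variable {V : Type*} {G : SimpleGraph V} {x y : V} {S T : Finset V}

/-- An obstruction, in the sense of Hall's theorem, to matching the neighbours of `x` to those of
`y` along the complement of `G`: sets of neighbours `S` of `x` and `T` of `y` with no edge of `Gᶜ`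
from `S` to `T`. That such an edge is missing is written as `s = t ∨ G.Adj s t`. -/
structure IsHallObstruction (G : SimpleGraph V) (x y : V) (S T : Finset V) : Prop where
  left_adj : ∀ s ∈ S, G.Adj x s
  right_adj : ∀ t ∈ T, G.Adj y t
  eq_or_adj : ∀ s ∈ S, ∀ t ∈ T, s = t ∨ G.Adj s t

theorem IsHallObstruction.symm (h : IsHallObstruction G x y S T) : IsHallObstruction G y x T S where
  left_adj := h.right_adj
  right_adj := h.left_adj
  eq_or_adj t ht s hs := (h.eq_or_adj s hs t ht).imp Eq.symm SimpleGraph.Adj.symm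

theorem IsHallObstruction.adj_of_ne (h : IsHallObstruction G x y S T) {s t : V} (hs : s ∈ S)
    (ht : t ∈ T) (hne : s ≠ t) : G.Adj s t :=
  (h.eq_or_adj s hs t ht).resolve_left hne

variable [Fintype V] [DecidableRel G.Adj]

theorem card_le_card_commonNeighbors {v w : V} {U : Finset V}
    (h : ∀ u ∈ U, G.Adj v u ∧ G.Adj w u) : #U ≤ Fintype.card (G.commonNeighbors v w) := by
  rw [← Set.toFinset_card]
  exact card_le_card fun u hu ↦ Set.mem_toFinset.2 (h u hu)

namespace IsHallObstruction

theorem card_left_le_degree (h : IsHallObstruction G x y S T) : #S ≤ G.degree x :=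
  card_le_card fun s hs ↦ (G.mem_neighborFinset x s).2 (h.left_adj s hs)

theorem card_right_le_of_notMem (h : IsHallObstruction G x y S T) {s : V} (hs : s ∈ S)
    (hsT : s ∉ T) : #T ≤ Fintype.card (G.commonNeighbors s y) :=
  card_le_card_commonNeighbors fun t ht ↦
    ⟨h.adj_of_ne hs ht fun hst ↦ hsT (hst ▸ ht), h.right_adj t ht⟩

-- `x` and the elements of `T` other than `c` and `p` are common neighbours of `c` and `p`; if
-- `p ∈ T`, then so is `y`, which makes up for the loss of `p`.
theorem card_right_le_of_mem_of_ne (h : IsHallObstruction G x y S T) (hxy : Gᶜ.Adj x y) {c p : V}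
    (hcS : c ∈ S) (hcT : c ∈ T) (hpS : p ∈ S) (hpc : p ≠ c) :
    #T ≤ Fintype.card (G.commonNeighbors c p) := by
  classical
  have hxT : x ∉ T := fun hx ↦ hxy.2 (h.right_adj x hx).symm
  have hyT : y ∉ T := fun hy ↦ (h.right_adj y hy).ne rfl
  have hcommon : ∀ z ∈ insert x ((T.erase c).erase p), G.Adj c z ∧ G.Adj p z := fun z hz ↦ by
    simp only [mem_insert, mem_erase] at hz
    obtain rfl | ⟨hzp, hzc, hzT⟩ := hz
    · exact ⟨(h.left_adj c hcS).symm, (h.left_adj p hpS).symm⟩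
    · exact ⟨h.adj_of_ne hcS hzT hzc.symm, h.adj_of_ne hpS hzT hzp.symm⟩
  have hxU : x ∉ (T.erase c).erase p := fun hx ↦ hxT (mem_of_mem_erase (mem_of_mem_erase hx))
  by_cases hpT : p ∈ T
  · have hy : G.Adj c y ∧ G.Adj p y := ⟨(h.right_adj c hcT).symm, (h.right_adj p hpT).symm⟩
    have hyU : y ∉ insert x ((T.erase c).erase p) := by simp [hxy.1.symm, hyT]
    calc #T = #(insert y (insert x ((T.erase c).erase p))) := by
          rw [card_insert_of_notMem hyU, card_insert_of_notMem hxU,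
            card_erase_add_one (mem_erase.2 ⟨hpc, hpT⟩), card_erase_add_one hcT]
      _ ≤ _ := card_le_card_commonNeighbors (forall_mem_insert _ _ _ |>.2 ⟨hy, hcommon⟩)
  · calc #T = #(insert x ((T.erase c).erase p)) := by
          rw [card_insert_of_notMem hxU, erase_eq_of_notMem fun hp ↦ hpT (mem_of_mem_erase hp),
            card_erase_add_one hcT]
      _ ≤ _ := card_le_card_commonNeighbors hcommon

theorem card_right_lt_degree (h : IsHallObstruction G x y S T) (hxy : Gᶜ.Adj x y) {c : V}
    (hcS : c ∈ S) (hcT : c ∈ T) : #T < G.degree c := by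
  classical
  have hyT : y ∉ T.erase c := fun hy ↦ (h.right_adj y (mem_of_mem_erase hy)).ne rfl
  have hxT : x ∉ insert y (T.erase c) := by
    simpa [hxy.1] using fun _ hx ↦ hxy.2 (h.right_adj x hx).symm
  calc #T < #(insert x (insert y (T.erase c))) := by
        rw [card_insert_of_notMem hxT, card_insert_of_notMem hyT, card_erase_add_one hcT]
        exact Nat.lt_succ_self _
    _ ≤ #(G.neighborFinset c) := card_le_card fun z hz ↦ by
        simp only [mem_insert, mem_erase] at hz
        rw [G.mem_neighborFinset]
        obtain rfl | rfl | ⟨hzc, hzT⟩ := hz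
        · exact (h.left_adj c hcS).symm
        · exact (h.right_adj c hcT).symm
        · exact h.adj_of_ne hcS hzT hzc.symm

variable {k mu : ℕ}

theorem card_add_card_le_of_mem (h : IsHallObstruction G x y S T) (hxy : Gᶜ.Adj x y)
    (hreg : G.IsRegularOfDegree k)
    (hadj : ∀ v w, G.Adj v w → 2 * Fintype.card (G.commonNeighbors v w) ≤ k)
    {c : V} (hcS : c ∈ S) (hcT : c ∈ T) : #S + #T ≤ k := by
  have hS : #S < k := hreg c ▸ h.symm.card_right_lt_degree hxy.symm hcT hcS
  have hT : #T < k := hreg c ▸ h.card_right_lt_degree hxy hcS hcT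
  obtain hS1 | hS1 := (Nat.succ_le_of_lt (card_pos.2 ⟨c, hcS⟩)).eq_or_lt
  · omega
  obtain hT1 | hT1 := (Nat.succ_le_of_lt (card_pos.2 ⟨c, hcT⟩)).eq_or_lt
  · omega
  obtain ⟨p, hpS, hpc⟩ := exists_mem_ne hS1 c
  obtain ⟨q, hqT, hqc⟩ := exists_mem_ne hT1 c
  have hT2 := h.card_right_le_of_mem_of_ne hxy hcS hcT hpS hpc
  have hS2 := h.symm.card_right_le_of_mem_of_ne hxy.symm hcT hcS hqT hqc
  have hcp := hadj c p (h.adj_of_ne hpS hcT hpc).symm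
  have hcq := hadj c q (h.adj_of_ne hcS hqT hqc.symm)
  omega

theorem card_add_card_le_of_forall_not_adj (h : IsHallObstruction G x y S T) (hxy : Gᶜ.Adj x y)
    (hnonadj : Pairwise fun v w ↦ ¬ G.Adj v w → Fintype.card (G.commonNeighbors v w) = mu)
    (hne : S.Nonempty) (hS : ∀ s ∈ S, ¬ G.Adj y s) : #S + #T ≤ G.degree x := by
  classical
  obtain ⟨s, hs⟩ := hne
  have hsy : s ≠ y := fun hsy ↦ hxy.2 (hsy ▸ h.left_adj s hs)
  have hT : #T ≤ Fintype.card (G.commonNeighbors x y) := by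
    rw [hnonadj hxy.1 hxy.2, ← hnonadj hsy fun hadj ↦ hS s hs hadj.symm]
    exact h.card_right_le_of_notMem hs fun hsT ↦ hS s hs (h.right_adj s hsT)
  have hdisj : Disjoint S (G.commonNeighbors x y).toFinset :=
    disjoint_left.2 fun z hzS hz ↦ hS z hzS (Set.mem_toFinset.1 hz).2
  calc #S + #T ≤ #S + #(G.commonNeighbors x y).toFinset := by rw [Set.toFinset_card]; gcongr
    _ = #(S ∪ (G.commonNeighbors x y).toFinset) := (card_union_of_disjoint hdisj).symm
    _ ≤ #(G.neighborFinset x) := card_le_card <| union_subset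
        (fun z hz ↦ (G.mem_neighborFinset x z).2 (h.left_adj z hz))
        fun z hz ↦ (G.mem_neighborFinset x z).2 (Set.mem_toFinset.1 hz).1

theorem card_add_card_le (h : IsHallObstruction G x y S T) (hxy : Gᶜ.Adj x y)
    (hreg : G.IsRegularOfDegree k)
    (hadj : ∀ v w, G.Adj v w → 2 * Fintype.card (G.commonNeighbors v w) ≤ k)
    (hnonadj : Pairwise fun v w ↦ ¬ G.Adj v w → Fintype.card (G.commonNeighbors v w) = mu) :
    #S + #T ≤ k := by
  obtain rfl | hS := S.eq_empty_or_nonempty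
  · simpa [hreg y] using h.symm.card_left_le_degree
  obtain rfl | hT := T.eq_empty_or_nonempty
  · simpa [hreg x] using h.card_left_le_degree
  by_cases hST : ∃ c ∈ S, c ∈ T
  · obtain ⟨c, hcS, hcT⟩ := hST
    exact h.card_add_card_le_of_mem hxy hreg hadj hcS hcT
  push Not at hST
  by_cases hSy : ∃ s ∈ S, G.Adj y s
  · by_cases hTx : ∃ t ∈ T, G.Adj x t
    · obtain ⟨s, hs, hys⟩ := hSy
      obtain ⟨t, ht, hxt⟩ := hTx
      have hT_le := h.card_right_le_of_notMem hs (hST s hs)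
      have hS_le := h.symm.card_right_le_of_notMem ht fun htS ↦ hST t htS ht
      have hsy := hadj s y hys.symm
      have htx := hadj t x hxt.symm
      omega
    · push Not at hTx
      rw [add_comm, ← hreg y]
      exact h.symm.card_add_card_le_of_forall_not_adj hxy.symm hnonadj hT hTx
  · push Not at hSy
    rw [← hreg x]
    exact h.card_add_card_le_of_forall_not_adj hxy hnonadj hS hSy

end IsHallObstruction

theorem exists_equiv_neighborSet_compl_adj (hdeg : G.degree x = G.degree y)
    (h : ∀ S T, IsHallObstruction G x y S T → #S + #T ≤ G.degree y) :
    ∃ e : G.neighborSet x ≃ G.neighborSet y, ∀ a, Gᶜ.Adj a.1 (e a).1 := by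
  refine exists_equiv_of_forall_card_add_card_le
    (r := fun (a : G.neighborSet x) (b : G.neighborSet y) ↦ Gᶜ.Adj a.1 b.1)
    (by simp only [G.card_neighborSet_eq_degree, hdeg]) fun S T hST ↦ ?_
  rw [G.card_neighborSet_eq_degree, ← card_map (.subtype _), ← card_map (.subtype _)]
  refine h _ _ ⟨fun s hs ↦ ?_, fun t ht ↦ ?_, fun s hs t ht ↦ ?_⟩
  · exact property_of_mem_map_subtype S hs
  · exact property_of_mem_map_subtype T ht
  · obtain ⟨a, ha, rfl⟩ := mem_map.1 hs
    obtain ⟨b, hb, rfl⟩ := mem_map.1 ht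
    by_contra! hab
    exact hST a ha b hb hab

/-- A joint law `w` for one step of a walker at `x` and a walker at `y` whose marginals are those of
the simple random walk and under which the walkers land on distinct non-adjacent vertices. -/
structure IsAvoidingStep [Fintype V] (G : SimpleGraph V) [DecidableRel G.Adj]
    (x y : V) (w : V × V → ℝ) : Prop where
  nonneg : ∀ q, 0 ≤ w q
  sum_left : ∀ x', ∑ y', w (x', y') = if G.Adj x x' then 1 / (G.degree x : ℝ) else 0
  sum_right : ∀ y', ∑ x', w (x', y') = if G.Adj y y' then 1 / (G.degree y : ℝ) else 0
  compl_adj : ∀ q, w q ≠ 0 → Gᶜ.Adj q.1 q.2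

theorem exists_isAvoidingStep_of_equiv (e : G.neighborSet x ≃ G.neighborSet y)
    (he : ∀ a, Gᶜ.Adj a.1 (e a).1) : ∃ w, IsAvoidingStep G x y w := by
  have hdeg : G.degree x = G.degree y := by
    simpa only [G.card_neighborSet_eq_degree] using Fintype.card_congr e
  have hgraph (x' y' : V) :
      (∃ h : G.Adj x x', (e ⟨x', h⟩ : V) = y') ↔ ∃ h : G.Adj y y', (e.symm ⟨y', h⟩ : V) = x' := by
    constructor
    · rintro ⟨h, rfl⟩
      exact ⟨(e ⟨x', h⟩).2, by simp⟩
    · rintro ⟨h, rfl⟩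
      exact ⟨(e.symm ⟨y', h⟩).2, by simp⟩
  classical
  refine ⟨fun q ↦ if ∃ h : G.Adj x q.1, (e ⟨q.1, h⟩ : V) = q.2 then 1 / (G.degree x : ℝ) else 0,
    fun q ↦ ?_, fun x' ↦ ?_, fun y' ↦ ?_, fun q hq ↦ ?_⟩
  · positivity
  · by_cases h : G.Adj x x'
    · rw [Fintype.sum_eq_single (e ⟨x', h⟩ : V) fun y' hy' ↦ by simp [h, hy'.symm]]
      simp [h]
    · simp [h]
  · by_cases h : G.Adj y y' <;> simp [hgraph, hdeg, h]
  · obtain ⟨h, hq⟩ := (ite_ne_right_iff.1 hq).1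
    exact hq ▸ he ⟨q.1, h⟩

namespace IsAvoidingStep

variable {w : V × V → ℝ}

theorem mem_stdSimplex (h : IsAvoidingStep G x y w) (hx : 0 < G.degree x) :
    w ∈ stdSimplex ℝ (V × V) := by
  refine ⟨h.nonneg, ?_⟩
  rw [Fintype.sum_prod_type]
  simp only [h.sum_left]
  rw [← sum_filter, ← G.neighborFinset_eq_filter, sum_const, G.card_neighborFinset_eq_degree,
    nsmul_eq_mul, mul_one_div_cancel (Nat.cast_pos.2 hx).ne']

theorem adj_left (h : IsAvoidingStep G x y w) {q : V × V} (hq : w q ≠ 0) : G.Adj x q.1 := by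
  by_contra hadj
  have hsum : ∑ y', w (q.1, y') = 0 := by rw [h.sum_left, if_neg hadj]
  exact hq ((sum_eq_zero_iff_of_nonneg fun y' _ ↦ h.nonneg _).1 hsum q.2 (mem_univ _))

end IsAvoidingStep

variable [DecidableEq V]

theorem exists_isUAC_of_forall_exists_isAvoidingStep (hdeg : ∀ x, 0 < G.degree x)
    (hne : ∃ x y, Gᶜ.Adj x y) (hstep : ∀ x y, Gᶜ.Adj x y → ∃ w, IsAvoidingStep G x y w) :
    ∃ T s, IsUAC G T s := by
  obtain ⟨x₀, y₀, h₀⟩ := hne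
  have : Nonempty (V × V) := ⟨(x₀, y₀)⟩
  choose! w hw using hstep
  -- Every other pair is sent to `(x₀, y₀)`, so that each transition ends in an edge of `Gᶜ` and a
  -- stationary distribution can charge nothing else.
  let T (p : V × V) : V × V → ℝ := if Gᶜ.Adj p.1 p.2 then w p.1 p.2 else Pi.single (x₀, y₀) 1
  have hT_step {x y : V} (hxy : Gᶜ.Adj x y) : IsAvoidingStep G x y (T (x, y)) := by
    simpa only [T, if_pos hxy] using hw x y hxy
  have hT_start {p : V × V} (hp : ¬ Gᶜ.Adj p.1 p.2) : T p = Pi.single (x₀, y₀) 1 := if_neg hp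
  have hT_mem (p : V × V) : T p ∈ stdSimplex ℝ (V × V) := by
    by_cases hp : Gᶜ.Adj p.1 p.2
    · exact (hT_step hp).mem_stdSimplex (hdeg p.1)
    · exact hT_start hp ▸ single_mem_stdSimplex ℝ (x₀, y₀)
  have hT_compl_adj {p q : V × V} (hq : T p q ≠ 0) : Gᶜ.Adj q.1 q.2 := by
    by_cases hp : Gᶜ.Adj p.1 p.2
    · exact (hT_step hp).compl_adj q hq
    · rw [hT_start hp, Pi.single_apply] at hq
      exact (ite_ne_right_iff.1 hq).1 ▸ h₀
  obtain ⟨s, hs_mem, hsT⟩ := exists_mem_stdSimplex_vecMul_eq_self_s19 (M := Matrix.of T)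
    (Matrix.mem_rowStochastic_iff_sum.2 ⟨fun p ↦ (hT_mem p).1, fun p ↦ (hT_mem p).2⟩)
  have hs_stat (q : V × V) : ∑ p, s p * T p q = s q := congrFun hsT q
  have hs_compl_adj {q : V × V} (hq : s q ≠ 0) : Gᶜ.Adj q.1 q.2 := by
    obtain ⟨p, -, hp⟩ := exists_ne_zero_of_sum_ne_zero ((hs_stat q).trans_ne hq)
    exact hT_compl_adj (right_ne_zero_of_mul hp)
  refine ⟨T, s, fun p ↦ (hT_mem p).1, fun p ↦ (hT_mem p).2, hs_mem.1, hs_mem.2, hs_stat,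
    fun x ↦ ?_, fun x y x' y' hs hT ↦ ⟨?_, ?_⟩, fun x y hs ↦ ?_⟩
  · by_contra hx
    exact (hs_compl_adj hx).1 rfl
  · rintro rfl
    exact (hs_compl_adj hs.ne').2 ((hT_step (hs_compl_adj hs.ne')).adj_left hT.ne')
  · exact (hT_compl_adj hT.ne').1.symm
  · exact ⟨(hT_step (hs_compl_adj hs.ne')).sum_left, (hT_step (hs_compl_adj hs.ne')).sum_right⟩

end Graph

theorem srg_admits_uac_general {V : Type*} [Fintype V] [DecidableEq V]
    (G : SimpleGraph V) [DecidableRel G.Adj] {k mu : ℕ} (hk : 0 < k)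
    (hreg : G.IsRegularOfDegree k)
    (hadj : ∀ v w, G.Adj v w → 2 * Fintype.card (G.commonNeighbors v w) ≤ k)
    (hnonadj : Pairwise fun v w ↦ ¬ G.Adj v w → Fintype.card (G.commonNeighbors v w) = mu)
    (hnoncomplete : ∃ x y : V, x ≠ y ∧ ¬ G.Adj x y) :
    ∃ (T : V × V → V × V → ℝ) (s : V × V → ℝ), IsUAC G T s := by
  refine exists_isUAC_of_forall_exists_isAvoidingStep (fun x ↦ (hreg x).symm ▸ hk)
    hnoncomplete fun x y hxy ↦ ?_
  obtain ⟨e, he⟩ := exists_equiv_neighborSet_compl_adj ((hreg x).trans (hreg y).symm)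
    fun S T h ↦ (hreg y).symm ▸ h.card_add_card_le hxy hreg hadj hnonadj
  exact exists_isAvoidingStep_of_equiv e he

/-- Any connected, non-complete strongly regular graph with parameters
$(n, k, λ, μ)$ satisfying $2·\max(λ, μ) ≤ k$ or $2λ < k$ admits a uniform
avoidance coupling of two simple random walks. -/
theorem srg_admits_uac {V : Type*} [Fintype V] [DecidableEq V]
    (G : SimpleGraph V) [DecidableRel G.Adj]
    (n k lam mu : ℕ) (hsrg : G.IsSRGWith n k lam mu)
    (hconn : G.Connected)
    (hnoncomplete : ∃ x y : V, x ≠ y ∧ ¬ G.Adj x y)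
    (hparam : 2 * max lam mu ≤ k ∨ 2 * lam < k) :
    ∃ (T : V × V → V × V → ℝ) (s : V × V → ℝ), IsUAC G T s := by
  have hk : 0 < k := by
    obtain ⟨x, y, hxy, -⟩ := hnoncomplete
    have : Nontrivial V := ⟨x, y, hxy⟩
    exact hsrg.regular x ▸ hconn.preconnected.degree_pos_of_nontrivial x
  exact srg_admits_uac_general G hk hsrg.regular
    (fun v w h ↦ by rw [hsrg.of_adj v w h]; omega) hsrg.of_not_adj hnoncomplete
end
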